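/- (Theorem 2.2, necessity) Let γ_{n+1} ≠ 0 for all n ≥ 0 and let (θ_n)_{n≥1} be real numbers with θ_n ≠ 0 satisfying ξ_{n+1}·θ_{n+1}·θ_n + ξ_n = 2·θ_n for n ≥ 1; adopt the conventions θ_0 = 1, θ_{−1} = 0, μ_{−1} = 2μ − 1, and assume the coefficients γ satisfy ξ_{n+1}·μ_{n+1}·(μ_{n+3}θ_{n+1} − μ_{n+2})·γ_{n+2} = ξ_{n+2}·μ_{n+2}·(μ_n θ_n − μ_{n−1})·γ_{n+1} for all n ≥ 0. Then for every n ≥ 1 the polynomial P_n satisfies the differential-difference equation (a_n x² − b_n)·(T_μ² P_n)(x) − c_n·x·(T_μ P_n)(x) − d_n·P_n(x) = 0, where a_n = θ_{n−1} − 1, b_n = (μ_{n+1}θ_{n−1} − μ_n)(μ_{n−1}θ_{n−1} − μ_{n−2})·γ_n/(ξ_n μ_n), c_n = μ_{n−2}θ_{n−1} − μ_{n−1}, and d_n = ξ_n μ_n θ_{n−1}. -/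

import Mathlib

/-!
Write `D n = T P_n`, `E n = T² P_n`, `m n = μ_n`, `x n = ξ_n`. On polynomials of parity `(-1)^n`
one has `T (X f) = X T f + ξ_n f`, so the three-term recurrence gives
`D (n+2) = X D (n+1) + ξ_{n+1} P_{n+1} - γ_{n+1} D n`.

The heart of the proof is the structure relation (`structure_rel`)
`μ_{n+1} P_n = D (n+1) + e_n D (n-1)` with `e_n = μ_{n+1} γ_n (1 - θ_{n-1}) / ξ_n`. It follows by
induction: inserting it into the three-term recurrence, the step reduces to two scalar identities,
one equivalent to the Riccati equation for `θ` and the other to the relation imposed on `γ`.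
Together with the recurrence for `D` it yields the lowering relation
`μ_n P_n = X D n - δ_n D (n-1)`, where `δ_n = γ_n - e_n`. Applying `T` to these relations and
eliminating `D (n-1)`, `E (n-1)` and `P_{n-1}` leaves a linear relation between `E n`, `X D n` and
`P_n` (`elimination`), which is a scalar multiple of the claimed equation when `n ≥ 3`.
The cases `n = 1, 2` are direct computations.
-/

open Polynomial

/-- The one-dimensional Dunkl operator `T_μ`:
`(T_μ f)(x) = f'(x) + μ (f(x) - f(-x))/x`. -/
noncomputable def dunkl (μ : ℝ) (f : ℝ[X]) : ℝ[X] :=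
  derivative f + C μ * ((f - f.comp (-X)) /ₘ X)

/-- `μ_k = k + μ(1 - (-1)^k)`; note `μ_{-1} = 2μ - 1`. -/
noncomputable def muI (μ : ℝ) (k : ℤ) : ℝ := k + μ * (1 - (-1 : ℝ) ^ k)

/-- `ξ_k = 1 + 2μ(-1)^k`. -/
noncomputable def xiI (μ : ℝ) (k : ℤ) : ℝ := 1 + 2 * μ * (-1 : ℝ) ^ k

/-! ### The Dunkl operator on polynomials -/

lemma X_mul_dunkl (μ : ℝ) (f : ℝ[X]) :
    X * dunkl μ f = X * derivative f + C μ * (f - f.comp (-X)) := by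
  have h : X * ((f - f.comp (-X)) /ₘ X) = f - f.comp (-X) := by
    have h0 : IsRoot (f - f.comp (-X)) 0 := by simp [IsRoot, eval_comp]
    have := mul_divByMonic_eq_iff_isRoot.2 h0
    simpa using this
  unfold dunkl
  linear_combination C μ * h

lemma dunkl_sub (μ : ℝ) (f g : ℝ[X]) : dunkl μ (f - g) = dunkl μ f - dunkl μ g := by
  apply mul_left_cancel₀ (X_ne_zero (R := ℝ))
  rw [mul_sub, X_mul_dunkl, X_mul_dunkl, X_mul_dunkl, derivative_sub, sub_comp]
  ring

lemma dunkl_add (μ : ℝ) (f g : ℝ[X]) : dunkl μ (f + g) = dunkl μ f + dunkl μ g := by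
  apply mul_left_cancel₀ (X_ne_zero (R := ℝ))
  rw [mul_add, X_mul_dunkl, X_mul_dunkl, X_mul_dunkl, derivative_add, add_comp]
  ring

lemma dunkl_C_mul (μ a : ℝ) (f : ℝ[X]) : dunkl μ (C a * f) = C a * dunkl μ f := by
  apply mul_left_cancel₀ (X_ne_zero (R := ℝ))
  rw [mul_left_comm X (C a), X_mul_dunkl, X_mul_dunkl, derivative_C_mul, mul_comp, C_comp]
  ring

lemma dunkl_one (μ : ℝ) : dunkl μ 1 = 0 := by
  apply mul_left_cancel₀ (X_ne_zero (R := ℝ))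
  rw [X_mul_dunkl]; simp

lemma dunkl_X_mul (μ s : ℝ) (f : ℝ[X]) (hf : f.comp (-X) = C s * f) :
    dunkl μ (X * f) = X * dunkl μ f + C (1 + 2 * μ * s) * f := by
  apply mul_left_cancel₀ (X_ne_zero (R := ℝ))
  rw [mul_add, X_mul_dunkl, X_mul_dunkl, mul_comp, hf]
  simp only [derivative_mul, derivative_X, X_comp, map_add, map_mul, map_one]
  have : (C (2 : ℝ) : ℝ[X]) = 2 := rfl
  rw [this]; ring

/-- `T` reverses parity. -/
lemma dunkl_parity (μ s : ℝ) (f : ℝ[X]) (hf : f.comp (-X) = C s * f) :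
    (dunkl μ f).comp (-X) = C (-s) * dunkl μ f := by
  have hd : (derivative f).comp (-X) = - C s * derivative f := by
    have := congrArg derivative hf
    rw [derivative_comp, derivative_C_mul] at this
    simp only [derivative_neg, derivative_X] at this
    linear_combination -this
  have hff : (f.comp (-X)).comp (-X) = f := by
    rw [comp_assoc]; simp
  have h := congrArg (fun p => p.comp (-X)) (X_mul_dunkl μ f)
  simp only [mul_comp, add_comp, sub_comp, X_comp, C_comp, hff, hd] at h
  -- This encodes `s² f = f`; the case `f = 0` prevents deducing `s² = 1`.
  have hss : C s * (f.comp (-X)) = f := by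
    have := hff
    rw [hf, mul_comp, C_comp] at this
    exact this
  apply mul_left_cancel₀ (X_ne_zero (R := ℝ))
  have h2 := X_mul_dunkl μ f
  simp only [map_neg]
  linear_combination -h + C s * h2 - C μ * hf - C μ * hss

/-! ### The sequences `μ_n` and `ξ_n` -/

lemma muI_succ (μ : ℝ) (k : ℤ) : muI μ (k + 1) = muI μ k + xiI μ k := by
  unfold muI xiI
  rw [zpow_add_one₀ (by norm_num)]; push_cast; ring

lemma xiI_succ (μ : ℝ) (k : ℤ) : xiI μ (k + 1) = 2 - xiI μ k := by
  unfold xiI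
  rw [zpow_add_one₀ (by norm_num)]; ring

lemma xiI_ne (μ : ℝ) (hμ2 : μ ≠ 1 / 2) (hμ3 : μ ≠ -1 / 2) (n : ℕ) : xiI μ n ≠ 0 := by
  unfold xiI
  rw [zpow_natCast]
  rcases neg_one_pow_eq_or ℝ n with h | h <;> rw [h] <;> intro h0
  · exact hμ3 (by linarith)
  · exact hμ2 (by linarith)

lemma muI_ne (μ : ℝ) (hμ1 : ∀ k : ℕ, μ ≠ -(k : ℝ) - 1 / 2) (n : ℕ) :
    muI μ ((n + 1 : ℕ) : ℤ) ≠ 0 := by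
  unfold muI
  rw [zpow_natCast]
  rcases Nat.even_or_odd' n with ⟨k, rfl | rfl⟩
  · have : (-1 : ℝ) ^ (2 * k + 1) = -1 := by rw [pow_succ, pow_mul]; simp
    rw [this]; push_cast
    intro h
    exact hμ1 k (by linarith)
  · have : (-1 : ℝ) ^ (2 * k + 1 + 1) = 1 := by rw [pow_succ, pow_succ, pow_mul]; simp
    rw [this]; push_cast
    have : (0 : ℝ) ≤ k := k.cast_nonneg
    intro h
    linarith

/-! ### The structure relation -/

/-- The coefficient in `μ_{n+2} P_{n+1} = T P_{n+2} + coefE n • T P_n`; it carries index `n + 1`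
in the numbering of `P`. -/
noncomputable def coefE (m x γ θ : ℕ → ℝ) (n : ℕ) : ℝ :=
  m (n + 2) * γ (n + 1) * (1 - θ n) / x (n + 1)

/-- The structure relation, from the three-term recurrences of `P` and of `D n = T P_n`. -/
lemma structure_rel (m x γ θ : ℕ → ℝ)
    (hm : ∀ n, m (n + 1) = m n + x n) (hx : ∀ n, x (n + 1) = 2 - x n)
    (hm0 : ∀ n, m (n + 1) ≠ 0) (hx0 : ∀ n, x n ≠ 0) (hθ0 : θ 0 = 1)
    (hric : ∀ n, x (n + 2) * θ (n + 2) * θ (n + 1) + x (n + 1) = 2 * θ (n + 1))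
    (hrec : ∀ n, x (n + 1) * m (n + 1) * (m (n + 3) * θ (n + 1) - m (n + 2)) * γ (n + 2)
      = x (n + 2) * m (n + 2) * (m n * θ n - (m n - 2 + x n)) * γ (n + 1))
    (P D : ℕ → ℝ[X]) (hP0 : P 0 = 1) (hP1 : P 1 = X)
    (hPrec : ∀ n : ℕ, P (n + 2) = X * P (n + 1) - C (γ (n + 1)) * P n)
    (hD0 : D 0 = 0) (hD1 : D 1 = C (m 1))
    (hDrec : ∀ n, D (n + 2) = X * D (n + 1) + C (x (n + 1)) * P (n + 1) - C (γ (n + 1)) * D n)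
    (n : ℕ) :
    C (m (n + 2)) * P (n + 1) = D (n + 2) + C (coefE m x γ θ n) * D n := by
  have hB : ∀ n, m (n + 1) * (γ (n + 2) + coefE m x γ θ n - coefE m x γ θ (n + 1))
      = coefE m x γ θ n * x n + m (n + 2) * γ (n + 1) := by
    intro n
    have h := hrec n
    have h1 := hx0 (n + 1)
    have h2 := hx0 (n + 2)
    unfold coefE
    simp only [add_assoc, Nat.reduceAdd]
    field_simp
    have a1 := hm n
    have a2 := hm (n + 1)
    have a3 := hm (n + 2)
    have b1 := hx n
    have b2 := hx (n + 1)
    simp only [add_assoc, Nat.reduceAdd] at a1 a2 a3 b1 b2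
    simp only [a3, a2, a1, b2, b1] at h ⊢
    linear_combination h
  have hA : ∀ n, coefE m x γ θ (n + 2) * γ (n + 2) * m (n + 3)
      = coefE m x γ θ (n + 1) *
        (coefE m x γ θ (n + 2) * x (n + 2) + m (n + 4) * γ (n + 3)) := by
    intro n
    have h := hric n
    have h1 := hx0 (n + 2)
    have h2 := hx0 (n + 3)
    have b1 := hx (n + 1)
    have b2 := hx (n + 2)
    unfold coefE
    simp only [add_assoc, Nat.reduceAdd] at *
    field_simp
    rw [b2]
    linear_combination γ (n + 2) * m (n + 3) * γ (n + 3) * m (n + 4) * (b1 - h)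
  -- The scalar identity fails at the bottom index, where the factor `D 0 = 0` makes up for it.
  have hAD : ∀ n, C (coefE m x γ θ (n + 1) * γ (n + 1) * m (n + 2)) * D n
      = C (coefE m x γ θ n *
        (coefE m x γ θ (n + 1) * x (n + 1) + m (n + 3) * γ (n + 2))) * D n := by
    rintro (_ | n)
    · simp [hD0]
    · exact congrArg (fun a => C a * D (n + 1)) (hA n)
  have base : C (m 2) * P 1 = D 2 + C (coefE m x γ θ 0) * D 0 := by
    rw [hDrec 0, hD0, hD1, hP1, hm 1, C_add]
    ring
  induction n using Nat.twoStepInduction with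
  | zero => exact base
  | one =>
    have h0 := hB 0
    have he : coefE m x γ θ 0 = 0 := by simp [coefE, hθ0]
    rw [he] at h0
    have h0' := congrArg C h0
    have hm3 := congrArg C (hm 2)
    have d3 := hDrec 1
    have p2 := hPrec 0
    simp only [zero_add, Nat.reduceAdd, map_add, map_sub, map_mul, map_zero, hD0, hP0, hP1, hD1]
      at *
    linear_combination P 2 * hm3 + C (m 2) * p2 - d3 + X * base + h0'
  | more n ih0 ih1 =>
    have hA' := hAD n
    have hB' := congrArg C (hB (n + 1))
    have hm4 := congrArg C (hm (n + 3))
    have d4 := hDrec (n + 2)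
    have d2 := hDrec n
    have p3 := hPrec (n + 1)
    apply mul_left_cancel₀ (C_ne_zero.2 (hm0 (n + 1)))
    simp only [add_assoc, Nat.reduceAdd, map_add, map_sub, map_mul] at *
    linear_combination C (m (n + 2)) * (P (n + 3) * hm4 + C (m (n + 3)) * p3 - d4 + X * ih1
        - C (coefE m x γ θ (n + 1)) * d2)
      - (C (coefE m x γ θ (n + 1)) * C (x (n + 1)) + C (m (n + 3)) * C (γ (n + 2))) * ih0
      + D (n + 2) * hB' + hA'

/-! ### The second-order equation -/

/-- Parity of the symmetric polynomials `P_n`. -/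
lemma symm_parity (γ : ℕ → ℝ) (P : ℕ → ℝ[X]) (hP0 : P 0 = 1) (hP1 : P 1 = X)
    (hPrec : ∀ n : ℕ, P (n + 2) = X * P (n + 1) - C (γ (n + 1)) * P n) (n : ℕ) :
    (P n).comp (-X) = C ((-1) ^ n) * P n := by
  induction n using Nat.twoStepInduction with
  | zero => simp [hP0]
  | one => simp [hP1]
  | more n ih0 ih1 =>
    rw [hPrec n, sub_comp, mul_comp, mul_comp, C_comp, X_comp, ih0, ih1]
    simp only [pow_succ, map_mul, map_neg, map_one]
    ring

/-- Second-order relation for `P₃` obtained by eliminating the polynomials of index `1` and `2`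
from the structure relation `h1` for `P₂` and the lowering relations `l2`, `l3` for `P₂`, `P₃`.
The number `s` is the sign with `P₃(-X) = s P₃(X)`. -/
lemma elimination (μ s m2 m3 e δ1 δ2 : ℝ) (D1 P2 P3 : ℝ[X])
    (p2 : P2.comp (-X) = C (-s) * P2) (p3 : P3.comp (-X) = C s * P3)
    (h1 : C m3 * P2 = dunkl μ P3 + C e * D1)
    (l2 : C m2 * P2 = X * dunkl μ P2 - C δ1 * D1)
    (l3 : C m3 * P3 = X * dunkl μ P3 - C δ2 * dunkl μ P2) :
    C (m3 * δ1 + e * (m2 - (1 + 2 * μ * s))) * (X * dunkl μ P3 - C m3 * P3)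
      = C (δ1 * δ2) * dunkl μ (dunkl μ P3)
        + C e * X * (X * dunkl μ (dunkl μ P3) + C (1 + 2 * μ * (-s)) * dunkl μ P3
          - C m3 * dunkl μ P3) := by
  have q3 := dunkl_parity μ _ _ p3
  have q2 := dunkl_parity μ _ _ p2
  rw [neg_neg] at q2
  have t3 := congrArg (dunkl μ) l3
  rw [dunkl_C_mul, dunkl_sub, dunkl_C_mul, dunkl_X_mul μ _ _ q3] at t3
  have h : C (m3 * δ1 + e * m2) * P2 = C δ1 * dunkl μ P3 + C e * (X * dunkl μ P2) := by
    simp only [map_add, map_mul]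
    linear_combination C δ1 * h1 + C e * l2
  have t := congrArg (dunkl μ) h
  rw [dunkl_C_mul, dunkl_add, dunkl_C_mul, dunkl_C_mul, dunkl_X_mul μ _ _ q2] at t
  simp only [map_add, map_mul, map_sub] at *
  linear_combination C δ2 * t + C e * X * t3
    - (C m3 * C δ1 + C e * (C m2 - (C 1 + C 2 * C μ * C s))) * l3

/-- **Statement 7 (Theorem 2.2, necessity).** If the recurrence coefficients `γ` and the
sequence `θ` (with `θ_0 = 1`, `μ_{-1} = 2μ - 1`) satisfy the Riccati equation and the
relation (2.1), then each `P_n` (`n ≥ 1`) satisfies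
`(a_n x² - b_n) T_μ² P_n - c_n x T_μ P_n - d_n P_n = 0` with
`a_n = θ_{n-1} - 1`,
`b_n = (μ_{n+1}θ_{n-1} - μ_n)(μ_{n-1}θ_{n-1} - μ_{n-2}) γ_n/(ξ_n μ_n)`,
`c_n = μ_{n-2}θ_{n-1} - μ_{n-1}`, `d_n = ξ_n μ_n θ_{n-1}`. -/
theorem dunkl_classical_diff_eq (μ : ℝ)
    (hμ1 : ∀ k : ℕ, μ ≠ -(k : ℝ) - 1 / 2) (hμ2 : μ ≠ 1 / 2) (hμ3 : μ ≠ -1 / 2)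
    (γ : ℕ → ℝ) (hγ : ∀ n : ℕ, γ (n + 1) ≠ 0)
    (θ : ℕ → ℝ) (hθ0 : θ 0 = 1) (hθne : ∀ n : ℕ, 1 ≤ n → θ n ≠ 0)
    (hric : ∀ n : ℕ, 1 ≤ n →
      xiI μ (n + 1) * θ (n + 1) * θ n + xiI μ n = 2 * θ n)
    (hγrec : ∀ n : ℕ,
      xiI μ (n + 1) * muI μ (n + 1) * (muI μ (n + 3) * θ (n + 1) - muI μ (n + 2)) * γ (n + 2)
        = xiI μ (n + 2) * muI μ (n + 2) * (muI μ n * θ n - muI μ ((n : ℤ) - 1)) * γ (n + 1))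
    (P : ℕ → ℝ[X]) (hP0 : P 0 = 1) (hP1 : P 1 = X)
    (hPrec : ∀ n : ℕ, P (n + 2) = X * P (n + 1) - C (γ (n + 1)) * P n) :
    ∀ n : ℕ, 1 ≤ n →
      (C (θ (n - 1) - 1) * X ^ 2 -
          C ((muI μ (n + 1) * θ (n - 1) - muI μ n) *
              (muI μ ((n : ℤ) - 1) * θ (n - 1) - muI μ ((n : ℤ) - 2)) *
              γ n / (xiI μ n * muI μ n))) * dunkl μ (dunkl μ (P n))
        - C (muI μ ((n : ℤ) - 2) * θ (n - 1) - muI μ ((n : ℤ) - 1)) * X * dunkl μ (P n)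
        - C (xiI μ n * muI μ n * θ (n - 1)) * P n = 0 := by
  set m : ℕ → ℝ := fun n => muI μ n with hm_def
  set x : ℕ → ℝ := fun n => xiI μ n with hx_def
  have hm : ∀ n, m (n + 1) = m n + x n := fun n => by
    simpa [hm_def, hx_def] using muI_succ μ n
  have hx : ∀ n, x (n + 1) = 2 - x n := fun n => by
    simpa [hx_def] using xiI_succ μ n
  have hm0 : ∀ n, m (n + 1) ≠ 0 := muI_ne μ hμ1
  have hx0 : ∀ n, x n ≠ 0 := xiI_ne μ hμ2 hμ3
  have hmz : m 0 = 0 := by simp [hm_def, muI]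
  have hxs : ∀ n, x n = 1 + 2 * μ * (-1) ^ n := fun n => by
    simp [hx_def, xiI]
  have hx_z : x 0 = 1 + 2 * μ := by simp [hxs]
  have hric' : ∀ n, x (n + 2) * θ (n + 2) * θ (n + 1) + x (n + 1) = 2 * θ (n + 1) := fun n => by
    have := hric (n + 1) (by omega)
    simp only [hx_def]
    push_cast at this ⊢
    rw [show (n : ℤ) + 2 = n + 1 + 1 by ring]
    exact this
  have hrec' : ∀ n, x (n + 1) * m (n + 1) * (m (n + 3) * θ (n + 1) - m (n + 2)) * γ (n + 2)
      = x (n + 2) * m (n + 2) * (m n * θ n - (m n - 2 + x n)) * γ (n + 1) := fun n => by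
    have h := hγrec n
    have h1 := muI_succ μ ((n : ℤ) - 1)
    have h2 := xiI_succ μ ((n : ℤ) - 1)
    rw [sub_add_cancel] at h1 h2
    have h3 : muI μ ((n : ℤ) - 1) = m n - 2 + x n := by
      simp only [hm_def, hx_def]; linarith
    rw [h3] at h
    simp only [hm_def, hx_def] at h ⊢
    push_cast
    exact h
  have hpar := symm_parity γ P hP0 hP1 hPrec
  have hD0 : dunkl μ (P 0) = 0 := by rw [hP0, dunkl_one]
  have hD1 : dunkl μ (P 1) = C (m 1) := by
    have := dunkl_X_mul μ 1 1 (by simp)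
    rw [mul_one, dunkl_one] at this
    rw [hP1, this, hm 0, hmz, hx_z]
    simp
  have hDrec : ∀ n, dunkl μ (P (n + 2)) = X * dunkl μ (P (n + 1)) + C (x (n + 1)) * P (n + 1)
      - C (γ (n + 1)) * dunkl μ (P n) := fun n => by
    rw [hPrec n, dunkl_sub, dunkl_C_mul, dunkl_X_mul μ _ _ (hpar (n + 1)), hxs]
  have hS := structure_rel m x γ θ hm hx hm0 hx0 hθ0 hric' hrec' P (fun n => dunkl μ (P n))
    hP0 hP1 hPrec hD0 hD1 hDrec
  have hL : ∀ n, C (m (n + 1)) * P (n + 1)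
      = X * dunkl μ (P (n + 1)) - C (γ (n + 1) - coefE m x γ θ n) * dunkl μ (P n) := fun n => by
    have h1 := hS n
    have h2 := hDrec n
    have h3 := congrArg C (hm (n + 1))
    simp only [add_assoc, Nat.reduceAdd, map_add, map_sub] at *
    linear_combination h1 + h2 - P (n + 1) * h3
  have hE1 : dunkl μ (C (m 1)) = 0 := by
    have := dunkl_C_mul μ (m 1) 1
    rwa [mul_one, dunkl_one, mul_zero] at this
  rintro (_ | _ | _ | N) hn
  · omega
  · have h1 : muI μ (-1) = 2 * μ - 1 := by simp [muI]; ring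
    have h2 : m 1 = 1 + 2 * μ := by rw [hm 0, hmz, hx_z]; ring
    have h3 : x 1 = 1 - 2 * μ := by rw [hx 0, hx_z]; ring
    have i1 : (((0 + 1 : ℕ) : ℤ) - 1) = ((0 : ℕ) : ℤ) := by norm_num
    have i2 : (((0 + 1 : ℕ) : ℤ) - 2) = -1 := by norm_num
    rw [i1, i2, h1]
    change (C (θ 0 - 1) * X ^ 2 - C _) * dunkl μ (dunkl μ (P 1))
        - C ((2 * μ - 1) * θ 0 - m 0) * X * dunkl μ (P 1) - C (x 1 * m 1 * θ 0) * P 1 = 0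
    rw [hD1, hE1, hθ0, hP1, hmz, h3, h2]
    simp only [map_add, map_sub, map_mul, map_one, map_zero]
    ring
  · have i1 : (((0 + 1 + 1 : ℕ) : ℤ) - 1) = ((1 : ℕ) : ℤ) := by norm_num
    have i2 : (((0 + 1 + 1 : ℕ) : ℤ) - 2) = ((0 : ℕ) : ℤ) := by norm_num
    have i3 : (((0 + 1 + 1 : ℕ) : ℤ) + 1) = ((3 : ℕ) : ℤ) := by norm_num
    rw [i1, i2, i3]
    change (C (θ 1 - 1) * X ^ 2 -
          C ((m 3 * θ 1 - m 2) * (m 1 * θ 1 - m 0) * γ 2 / (x 2 * m 2)))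
            * dunkl μ (dunkl μ (P 2))
        - C (m 0 * θ 1 - m 1) * X * dunkl μ (P 2) - C (x 2 * m 2 * θ 1) * P 2 = 0
    have hD2 : dunkl μ (P 2) = C (m 2) * X := by
      have := hS 0
      simp only [zero_add, hD0, hP1, mul_zero, add_zero] at this
      exact this.symm
    have hX : dunkl μ X = C (m 1) := by rw [← hP1, hD1]
    have hm1 : m 1 = x 0 := by rw [hm 0, hmz, zero_add]
    have hx1 : x 1 = 2 - x 0 := hx 0
    have hx2 : x 2 = x 0 := by rw [hx 1, hx1]; ring
    have hx1' := hx0 1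
    have hb : (m 3 * θ 1 - m 2) * (m 1 * θ 1 - m 0) * γ 2 / (x 2 * m 2) = θ 1 * γ 1 := by
      rw [div_eq_iff (mul_ne_zero (hx0 2) (hm0 1))]
      apply mul_left_cancel₀ hx1'
      have h := hrec' 0
      simp only [zero_add] at h
      linear_combination θ 1 * h - x 1 * (m 3 * θ 1 - m 2) * γ 2 * hmz
        + θ 1 * x 2 * m 2 * γ 1 * (θ 0 * hmz - hmz - hx1)
    rw [hb, hD2, dunkl_C_mul, hX, hPrec 0, hP0, zero_add, hP1, hm1, hmz, hx2]
    simp only [map_sub, map_mul, map_one, map_zero]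
    ring
  · have hel := elimination μ ((-1) ^ (N + 3)) (m (N + 2)) (m (N + 3)) (coefE m x γ θ (N + 1))
      (γ (N + 2) - coefE m x γ θ (N + 1)) (γ (N + 3) - coefE m x γ θ (N + 2))
      (dunkl μ (P (N + 1))) (P (N + 2)) (P (N + 3))
      (by rw [hpar, pow_succ _ (N + 2)]; simp) (hpar _) (hS (N + 1)) (hL (N + 1)) (hL (N + 2))
    have hs2 : 1 + 2 * μ * -(-1) ^ (N + 3) = x (N + 2) := by rw [hxs, pow_succ _ (N + 2)]; ring
    rw [← hxs, hs2] at hel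
    have i1 : (((N + 1 + 1 + 1 : ℕ) : ℤ) - 1) = ((N + 2 : ℕ) : ℤ) := by push_cast; ring
    have i2 : (((N + 1 + 1 + 1 : ℕ) : ℤ) - 2) = ((N + 1 : ℕ) : ℤ) := by push_cast; ring
    have i3 : (((N + 1 + 1 + 1 : ℕ) : ℤ) + 1) = ((N + 4 : ℕ) : ℤ) := by push_cast; ring
    rw [i1, i2, i3]
    change (C (θ (N + 2) - 1) * X ^ 2 -
          C ((m (N + 4) * θ (N + 2) - m (N + 3)) *
              (m (N + 2) * θ (N + 2) - m (N + 1)) *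
              γ (N + 3) / (x (N + 3) * m (N + 3)))) * dunkl μ (dunkl μ (P (N + 3)))
        - C (m (N + 1) * θ (N + 2) - m (N + 2)) * X * dunkl μ (P (N + 3))
        - C (x (N + 3) * m (N + 3) * θ (N + 2)) * P (N + 3) = 0
    have g2 : γ (N + 2) ≠ 0 := hγ (N + 1)
    have t1 : θ (N + 1) ≠ 0 := hθne (N + 1) (by omega)
    have m3 := hm0 (N + 2)
    have x1 := hx0 (N + 1)
    have x2 := hx0 (N + 2)
    have x3 := hx0 (N + 3)
    have r := hric' N
    have ht2 : θ (N + 2) = (2 * θ (N + 1) - x (N + 1)) / (x (N + 2) * θ (N + 1)) := by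
      field_simp; linarith
    have hm2 := hm (N + 1)
    have hm3 := hm (N + 2)
    have hm4 := hm (N + 3)
    have hx2 := hx (N + 1)
    have hx3 := hx (N + 2)
    simp only [add_assoc, Nat.reduceAdd] at m3 hm2 hm3 hm4 hx2 hx3
    have hx31 : x (N + 3) = x (N + 1) := by rw [hx3, hx2]; ring
    have hx1' : x (N + 1) = 2 - x (N + 2) := by rw [hx2]; ring
    have hm1' : m (N + 1) = m (N + 2) - x (N + 1) := by rw [hm2]; ring
    -- The factor between the eliminated relation and the claim.
    obtain ⟨l, hl⟩ : ∃ l, l = -x (N + 1) / (θ (N + 1) * γ (N + 2) * m (N + 3)) := ⟨_, rfl⟩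
    have he1 : coefE m x γ θ (N + 1)
        = m (N + 3) * γ (N + 2) * (1 - θ (N + 1)) / x (N + 2) := rfl
    have he2 : coefE m x γ θ (N + 2)
        = m (N + 4) * γ (N + 3) * (1 - θ (N + 2)) / x (N + 3) := rfl
    have A : l * coefE m x γ θ (N + 1) = θ (N + 2) - 1 := by
      rw [hl, he1, ht2]
      field_simp
      rw [hx1']; ring
    have Bl : l * (γ (N + 2) - coefE m x γ θ (N + 1))
        = -(m (N + 2) * θ (N + 2) - m (N + 1)) / m (N + 3) := by
      rw [mul_sub, A]
      rw [hl, eq_div_iff m3, ht2]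
      field_simp
      rw [hm3, hm1', hx1']; ring
    have Br : γ (N + 3) - coefE m x γ θ (N + 2)
        = (m (N + 4) * θ (N + 2) - m (N + 3)) * γ (N + 3) / x (N + 3) := by
      rw [he2]
      field_simp
      rw [hm4]; ring
    have B : l * ((γ (N + 2) - coefE m x γ θ (N + 1)) * (γ (N + 3) - coefE m x γ θ (N + 2)))
        = -((m (N + 4) * θ (N + 2) - m (N + 3)) * (m (N + 2) * θ (N + 2) - m (N + 1)) *
              γ (N + 3) / (x (N + 3) * m (N + 3))) := by
      rw [← mul_assoc, Bl, Br]
      field_simp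
    have K : l * (m (N + 3) * (γ (N + 2) - coefE m x γ θ (N + 1))
        + coefE m x γ θ (N + 1) * (m (N + 2) - x (N + 3))) = -(x (N + 3) * θ (N + 2)) := by
      have : m (N + 3) * (l * (γ (N + 2) - coefE m x γ θ (N + 1)))
          = -(m (N + 2) * θ (N + 2) - m (N + 1)) := by
        rw [Bl]; field_simp
      rw [hx31]
      linear_combination this + (m (N + 2) - x (N + 1)) * A + hm1'
    have A' := congrArg C A
    have B' := congrArg C B
    have K' := congrArg C K
    have M' := congrArg C hm3
    have M1' := congrArg C hm1'
    have X' := congrArg C hx31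
    rw [map_neg] at B'
    generalize (m (N + 4) * θ (N + 2) - m (N + 3)) * (m (N + 2) * θ (N + 2) - m (N + 1)) *
              γ (N + 3) / (x (N + 3) * m (N + 3)) = b at *
    generalize dunkl μ (dunkl μ (P (N + 3))) = E at *
    generalize dunkl μ (P (N + 3)) = D at *
    generalize P (N + 3) = Q at *
    simp only [map_add, map_sub, map_mul, map_neg, map_one] at *
    linear_combination (-C l) * hel - X ^ 2 * E * A' - E * B' + (X * D - C (m (N + 3)) * Q) * K'
      + X * D * ((C (m (N + 3)) - C (x (N + 2))) * A' + (C (θ (N + 2)) - 1) * M'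
        - C (θ (N + 2)) * M1' - C (θ (N + 2)) * X')
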